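/- Let k be a field of characteristic zero. Let P = k[x₁, x₂, x₃, …] be the polynomial ring over k on a countably infinite set of variables, and let 𝔪 ⊆ P be the ideal generated by all the variables (equivalently, the kernel of the k-algebra homomorphism P → k sending every variable to 0). Let R = lim_n P/𝔪ⁿ be the 𝔪-adic completion of P, and let 𝔪_R = ker(ε) be the augmentation ideal of R, where ε : R → k is the ring homomorphism induced by sending every variable to 0. Then the canonical ring homomorphism R → lim_n R/𝔪_Rⁿ from R to its 𝔪_R-adic completion is not surjective; in particular, R is not 𝔪_R-adically complete. -/

import Mathlib

noncomputable section

open MvPolynomial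

/-- Evaluation at zero: the `k`-algebra homomorphism `P = k[x₁, x₂, …] → k` sending every
variable to `0`, viewed as a ring homomorphism. -/
def evalZero (k : Type*) [Field k] : MvPolynomial ℕ k →+* k :=
  (aeval (fun _ : ℕ => (0 : k)) : MvPolynomial ℕ k →ₐ[k] k).toRingHom

/-- The augmentation ideal `𝔪` of `P = k[x₁, x₂, …]`: the kernel of the `k`-algebra
homomorphism sending every variable to `0` (equivalently, the ideal generated by all
the variables). -/
def mAug (k : Type*) [Field k] : Ideal (MvPolynomial ℕ k) :=
  RingHom.ker (evalZero k)

theorem evalZero_surjective (k : Type*) [Field k] : Function.Surjective (evalZero k) :=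
  fun a => ⟨C a, by simp [evalZero]⟩

/-- `R = lim_n P/𝔪ⁿ`, the `𝔪`-adic completion of `P = k[x₁, x₂, …]`, i.e. the power series
ring `k⟦x₁, x₂, …⟧` on countably many generators. -/
abbrev Rcompletion (k : Type*) [Field k] : Type _ :=
  AdicCompletion (mAug k) (MvPolynomial ℕ k)

/-- The augmentation `ε : R → k`, the ring homomorphism induced by sending every variable
to `0`: the composite of the canonical projection `R → P ⧸ 𝔪¹ = P ⧸ 𝔪` with the
isomorphism `P ⧸ 𝔪 ≅ k` induced by evaluation at zero. -/
def epsilonAug (k : Type*) [Field k] : Rcompletion k →+* k :=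
  (RingHom.quotientKerEquivOfSurjective (evalZero_surjective k)).toRingHom.comp
    ((Ideal.quotEquivOfEq (pow_one (mAug k))).toRingHom.comp
      (AdicCompletion.evalₐ (mAug k) 1).toRingHom)

/-!
Write `M` for the augmentation ideal of the completion of `P` at the ideal `𝔪` of the variables.
If the completion were `M`-adically precomplete, the kernel of its projection to `P ⧸ 𝔪 ^ 2` would
be `M ^ 2`. An element of `M ^ 2` lies in the square of an ideal with finitely many generators, say
`r`. However, choose disjoint blocks of `l` variables for all `l`, and sum power sums of
increasing degrees in these blocks. The result lies in the kernel, and projecting it to the block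
of `r + 1` variables gives a power sum `∑ X j ^ d` in the square of an ideal `I ⊆ 𝔪` with `r`
generators, modulo a high power of `𝔪`. Differentiating puts every `X j ^ (d - 1)` in `I` modulo a
high power of `𝔪`, so by Nakayama's lemma `𝔪` is a minimal prime of `I`. This contradicts Krull's
height theorem, since `𝔪` has height `r + 1`.
-/

section Ideals

variable {A B : Type*} [CommRing A] [CommRing B]

/-- The element `a` lies, modulo `I ^ n`, in the square of an ideal generated by `r` elements
of `I`. An element of the square of the augmentation ideal of the `I`-adic completion satisfies this
at every level `n` with the same `r`. Generators are indexed by `Fin r` and may repeat, so that the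
predicate is preserved by ring homomorphisms. -/
def MemSqSpanMod (I : Ideal A) (r n : ℕ) (a : A) : Prop :=
  ∃ v : Fin r → A, (∀ i, v i ∈ I) ∧ a ∈ Ideal.span (Set.range v) ^ 2 ⊔ I ^ n

theorem MemSqSpanMod.map {I : Ideal A} {J : Ideal B} {r n : ℕ} {a : A}
    {F : Type*} [FunLike F A B] [RingHomClass F A B] (ha : MemSqSpanMod I r n a) (f : F)
    (hf : I.map f ≤ J) : MemSqSpanMod J r n (f a) := by
  obtain ⟨v, hv, hav⟩ := ha
  refine ⟨f ∘ v, fun i ↦ hf (Ideal.mem_map_of_mem f (hv i)), ?_⟩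
  have hfa := Ideal.mem_map_of_mem f hav
  rw [Ideal.map_sup, Ideal.map_pow, Ideal.map_pow, Ideal.map_span, ← Set.range_comp] at hfa
  exact sup_le_sup_left (Ideal.pow_right_mono hf n) _ hfa

theorem exists_mem_span_range_sq_of_mem_sq {I : Ideal A} {x : A} (hx : x ∈ I ^ 2) :
    ∃ (r : ℕ) (v : Fin r → A), (∀ i, v i ∈ I) ∧ x ∈ Ideal.span (Set.range v) ^ 2 := by
  classical
  rw [sq] at hx
  obtain ⟨S, T, hS, hT, hx⟩ := Submodule.mem_span_mul_finite_of_mem_mul hx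
  have hrange : Set.range (fun i ↦ ((S ∪ T).equivFin.symm i : A)) = ↑(S ∪ T) := by
    rw [Set.range_comp' Subtype.val, Equiv.range_eq_univ, Set.image_univ, Subtype.range_coe]
  refine ⟨_, fun i ↦ ((S ∪ T).equivFin.symm i : A), fun i ↦ ?_, ?_⟩
  · exact (Finset.mem_union.1 ((S ∪ T).equivFin.symm i).2).elim (@hS _) (@hT _)
  · rw [hrange, sq, Ideal.span_mul_span']
    exact Ideal.span_mono (Set.mul_subset_mul (by simp) (by simp)) hx

theorem derivation_apply_mem_pow {R : Type*} [CommSemiring R] [Algebra R A] (D : Derivation R A A)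
    (I : Ideal A) (n : ℕ) {x : A} (hx : x ∈ I ^ (n + 1)) : D x ∈ I ^ n := by
  induction n generalizing x with
  | zero => simp
  | succ n ih =>
    rw [pow_succ] at hx
    refine Submodule.mul_induction_on hx (fun a ha b hb ↦ ?_) fun a b ha hb ↦ ?_
    · rw [D.leibniz, smul_eq_mul, smul_eq_mul, pow_succ I n, mul_comm b]
      exact add_mem (Ideal.mul_mem_right _ _ (by rwa [← pow_succ]))
        (Ideal.mul_mem_mul (ih ha) hb)
    · rw [map_add]
      exact add_mem ha hb

theorem mem_minimalPrimes_of_le_sup_mul {I J m : Ideal A} [hm : m.IsPrime] (hI : I ≤ m)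
    (hJ : J.FG) (hmJ : m ≤ J.radical) (hJI : J ≤ I ⊔ m * J) : m ∈ I.minimalPrimes := by
  obtain ⟨r, hr, hrJ⟩ :=
    Submodule.exists_sub_one_mem_and_smul_le_of_fg_of_le_sup hJ le_rfl hJI
  have hrm : r ∉ m := fun h ↦
    hm.ne_top (m.eq_top_iff_one.2 (by simpa using sub_mem h hr))
  refine ⟨⟨hm, hI⟩, fun p ⟨hp, hIp⟩ hpm ↦ hmJ.trans (hp.radical_le_iff.2 fun x hx ↦ ?_)⟩
  have hrx : r * x ∈ p := hIp (hrJ (Submodule.smul_mem_pointwise_smul x r J hx))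
  exact (hp.mem_or_mem hrx).resolve_left fun h ↦ hrm (hpm h)

end Ideals

section Completion

open AdicCompletion

variable {A : Type*} [CommRing A] {I : Ideal A}

theorem map_evalₐ_ker_evalOneₐ_le (n : ℕ) :
    (RingHom.ker (evalOneₐ I)).map (evalₐ I n) ≤ I.map (Ideal.Quotient.mk (I ^ n)) := by
  rw [Ideal.map_le_iff_le_comap]
  intro x hx
  obtain ⟨f, rfl⟩ := mk_surjective I A x
  have hf : f.val (n + 1) ∈ I := by
    have hfac : evalOneₐ I (mk I A f) = Ideal.Quotient.mk I (f.val 1) := by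
      rw [← factorₐ_evalₐ_one, evalₐ_mk, Ideal.Quotient.factor_mk]
    have hf1 : f.val 1 ∈ I := Ideal.Quotient.eq_zero_iff_mem.1 (hfac ▸ hx)
    have hsub : f.val (n + 1) - f.val 1 ∈ I ^ 1 :=
      Ideal.Quotient.eq.1 (AdicCompletion.Ideal.mk_eq_mk I n.succ_pos f)
    rw [pow_one] at hsub
    exact (Submodule.sub_mem_iff_left _ hf1).1 hsub
  rw [Ideal.mem_comap]
  rw [evalₐ_mk, ← AdicCompletion.Ideal.mk_eq_mk I n.le_succ f]
  exact Ideal.mem_map_of_mem _ hf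

theorem ker_evalOneₐ_pow_le_ker_evalₐ (n : ℕ) :
    RingHom.ker (evalOneₐ I) ^ n ≤ RingHom.ker (evalₐ I n) := by
  rw [← Ideal.map_eq_bot_iff_le_ker, Ideal.map_pow, eq_bot_iff]
  refine (Ideal.pow_right_mono (map_evalₐ_ker_evalOneₐ_le n) n).trans ?_
  rw [← Ideal.map_pow, Ideal.map_quotient_self]

theorem of_mem_ker_evalOneₐ_pow {n : ℕ} {a : A} (ha : a ∈ I ^ n) :
    of I A a ∈ RingHom.ker (evalOneₐ I) ^ n := by
  have hI : I.map (algebraMap A (AdicCompletion I A)) ≤ RingHom.ker (evalOneₐ I) :=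
    Ideal.map_le_iff_le_comap.2 fun b hb ↦ Ideal.Quotient.eq_zero_iff_mem.2 hb
  have hmap := Ideal.mem_map_of_mem (algebraMap A (AdicCompletion I A)) ha
  rw [Ideal.map_pow] at hmap
  exact Ideal.pow_right_mono hI n hmap

theorem ker_evalₐ_le_pow_of_isPrecomplete
    [IsPrecomplete (RingHom.ker (evalOneₐ I)) (AdicCompletion I A)] (n : ℕ) :
    RingHom.ker (evalₐ I n) ≤ RingHom.ker (evalOneₐ I) ^ n := by
  set M := RingHom.ker (evalOneₐ I)
  intro x hx
  obtain ⟨f, rfl⟩ := mk_surjective I A x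
  obtain ⟨L, hL⟩ := IsPrecomplete.prec (I := M) inferInstance
    (f := fun N ↦ of I A (f.val N)) fun {a b} hab ↦ by
      have hsub := Ideal.Quotient.eq.1 (AdicCompletion.Ideal.mk_eq_mk I hab f).symm
      rw [SModEq.sub_mem, smul_eq_mul, Ideal.mul_top, ← map_sub]
      exact of_mem_ker_evalOneₐ_pow hsub
  replace hL (N : ℕ) : of I A (f.val N) - L ∈ M ^ N := by
    simpa [SModEq.sub_mem] using hL N
  have hLf : L = mk I A f := ext_evalₐ fun N ↦ by
    have hker := ker_evalOneₐ_pow_le_ker_evalₐ N (hL N)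
    rw [RingHom.mem_ker, map_sub, evalₐ_of, sub_eq_zero] at hker
    rw [evalₐ_mk, hker]
  have hfn : f.val n ∈ I ^ n := by
    rwa [RingHom.mem_ker, evalₐ_mk, Ideal.Quotient.eq_zero_iff_mem] at hx
  exact hLf ▸ (Submodule.sub_mem_iff_right _ (of_mem_ker_evalOneₐ_pow hfn)).1 (hL n)

theorem exists_memSqSpanMod_of_mem_sq {x : AdicCompletion I A}
    (hx : x ∈ RingHom.ker (evalOneₐ I) ^ 2) :
    ∃ r, ∀ n a, evalₐ I n x = Ideal.Quotient.mk (I ^ n) a → MemSqSpanMod I r n a := by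
  obtain ⟨r, v, hv, hxv⟩ := exists_mem_span_range_sq_of_mem_sq hx
  refine ⟨r, fun n a ha ↦ ?_⟩
  have hlift (i : Fin r) : ∃ w ∈ I, Ideal.Quotient.mk (I ^ n) w = evalₐ I n (v i) :=
    (Ideal.mem_map_iff_of_surjective _ Ideal.Quotient.mk_surjective).1
      (map_evalₐ_ker_evalOneₐ_le n (Ideal.mem_map_of_mem _ (hv i)))
  choose w hwI hw using hlift
  refine ⟨w, hwI, ?_⟩
  have hmap := Ideal.mem_map_of_mem (evalₐ I n) hxv
  rw [Ideal.map_pow, Ideal.map_span, ← Set.range_comp] at hmap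
  rw [← Ideal.mem_quotient_iff_mem_sup, ← ha, Ideal.map_pow, Ideal.map_span, ← Set.range_comp]
  rwa [show Ideal.Quotient.mk (I ^ n) ∘ w = evalₐ I n ∘ v from funext hw]

theorem exists_evalₐ_eq_mk_sum_range {g : ℕ → A} (hg : ∀ l, g l ∈ I ^ l) :
    ∃ x : AdicCompletion I A,
      ∀ n, evalₐ I n x = Ideal.Quotient.mk (I ^ n) (∑ l ∈ Finset.range n, g l) := by
  let f : AdicCauchySequence I A := .mk I A (fun n ↦ ∑ l ∈ Finset.range n, g l) fun n ↦ by
    rw [SModEq.comm, SModEq.sub_mem, Finset.sum_range_succ, add_sub_cancel_left]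
    simpa using hg n
  exact ⟨mk I A f, fun n ↦ evalₐ_mk I n f⟩

end Completion

section Variables

variable {σ R : Type*} [CommRing R]

open scoped Classical in
theorem ker_aeval_ite_eq_span_X_image (s : Set σ) :
    RingHom.ker (aeval (R := R) fun i ↦ if i ∈ s then 0 else (X i : MvPolynomial σ R)) =
      Ideal.span (X '' s) := by
  apply le_antisymm
  · set J : Ideal (MvPolynomial σ R) := Ideal.span (X '' s)
    have hcomp : (Ideal.Quotient.mkₐ R J).comp (aeval fun i ↦ if i ∈ s then 0 else X i) =
        Ideal.Quotient.mkₐ R J := by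
      refine algHom_ext fun i ↦ ?_
      by_cases hi : i ∈ s
      · have hXi : X i ∈ J := Ideal.subset_span ⟨i, hi, rfl⟩
        simp [hi, Ideal.Quotient.eq_zero_iff_mem.2 hXi]
      · simp [hi]
    intro p hp
    have hp0 := DFunLike.congr_fun hcomp p
    rw [AlgHom.comp_apply, RingHom.mem_ker.1 hp, map_zero] at hp0
    exact Ideal.Quotient.eq_zero_iff_mem.1 hp0.symm
  · rw [Ideal.span_le]
    rintro _ ⟨i, hi, rfl⟩
    simp [hi]

theorem isPrime_span_X_image [IsDomain R] (s : Set σ) :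
    (Ideal.span (X '' s) : Ideal (MvPolynomial σ R)).IsPrime := by
  classical
  rw [← ker_aeval_ite_eq_span_X_image]
  exact RingHom.ker_isPrime _

theorem card_le_height_span_X_image [IsDomain R] (s : Finset σ) :
    (s.card : ℕ∞) ≤ (Ideal.span (X '' s) : Ideal (MvPolynomial σ R)).height := by
  classical
  induction s using Finset.induction_on with
  | empty => simp
  | insert i s hi ih =>
    have := isPrime_span_X_image (R := R) (s : Set σ)
    have := isPrime_span_X_image (R := R) (insert i s : Set σ)
    have hlt : (Ideal.span (X '' s) : Ideal (MvPolynomial σ R)) < Ideal.span (X '' insert i s) := by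
      refine lt_of_le_not_ge (Ideal.span_mono (Set.image_mono (Set.subset_insert _ _))) fun h ↦ ?_
      have hXi : (X i : MvPolynomial σ R) ∈ Ideal.span (X '' s) :=
        h (Ideal.subset_span ⟨i, Set.mem_insert _ _, rfl⟩)
      rw [mem_ideal_span_X_image, support_X] at hXi
      obtain ⟨j, hj, hij⟩ := hXi _ (Finset.mem_singleton_self _)
      exact hi (Finsupp.single_apply_ne_zero.1 hij |>.1 ▸ hj)
    rw [Finset.card_insert_of_notMem hi, Finset.coe_insert, Nat.cast_succ]
    exact (add_le_add_left ih 1).trans (Ideal.height_add_one_le_of_lt_of_isPrime hlt)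

theorem isPrime_idealOfVars [IsDomain R] : (idealOfVars σ R).IsPrime := by
  rw [idealOfVars, ← Set.image_univ]
  exact isPrime_span_X_image _

theorem card_le_height_idealOfVars [IsDomain R] [Fintype σ] :
    (Fintype.card σ : ℕ∞) ≤ (idealOfVars σ R).height := by
  simpa using card_le_height_span_X_image (R := R) (Finset.univ : Finset σ)

theorem X_pow_mem_of_psum_mem [Fintype σ] {I m : Ideal (MvPolynomial σ R)} {d n : ℕ}
    (hd : IsUnit (d : R)) (h : psum σ R d ∈ I ^ 2 ⊔ m ^ (n + 1)) (j : σ) :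
    X j ^ (d - 1) ∈ I ⊔ m ^ n := by
  classical
  obtain ⟨a, ha, b, hb, hab⟩ := Submodule.mem_sup.1 h
  have hmem : pderiv j (psum σ R d) ∈ I ⊔ m ^ n := by
    rw [← hab, map_add]
    exact Submodule.add_mem_sup (by simpa using derivation_apply_mem_pow (pderiv j) I 1 ha)
      (derivation_apply_mem_pow (pderiv j) m n hb)
  have hpderiv : pderiv j (psum σ R d) = C (d : R) * X j ^ (d - 1) := by
    simp [psum, pderiv_X, Pi.single_apply]
  rw [hpderiv] at hmem
  exact (Ideal.unit_mul_mem_iff_mem _ (hd.map C)).1 hmem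

theorem exists_card_le_of_memSqSpanMod_psum [IsDomain R] [IsNoetherianRing R] [Fintype σ] {d : ℕ}
    (hd : IsUnit (d : R)) :
    ∃ N, ∀ n ≥ N, ∀ r, MemSqSpanMod (idealOfVars σ R) r n (psum σ R d) → Fintype.card σ ≤ r := by
  set m := idealOfVars σ R
  set J : Ideal (MvPolynomial σ R) := Ideal.span (Set.range fun j ↦ X j ^ (d - 1))
  have hmJ : m ≤ J.radical := by
    rw [Ideal.span_le]
    rintro _ ⟨j, rfl⟩
    exact ⟨d - 1, Ideal.subset_span ⟨j, rfl⟩⟩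
  obtain ⟨N, hN⟩ := Ideal.exists_pow_le_of_le_radical_of_fg hmJ (idealOfVars_fg σ R)
  refine ⟨N + 2, fun n hn r ⟨v, hv, hpsum⟩ ↦ ?_⟩
  set I := Ideal.span (Set.range v)
  have hJI : J ≤ I ⊔ m * J := by
    rw [Ideal.span_le]
    rintro _ ⟨j, rfl⟩
    have hX := X_pow_mem_of_psum_mem hd
      (sup_le_sup_left (Ideal.pow_le_pow_right hn) (I ^ 2) hpsum) j
    rw [pow_succ'] at hX
    exact sup_le_sup_left (Ideal.mul_mono_right hN) I hX
  have := isPrime_idealOfVars (σ := σ) (R := R)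
  have hmin : m ∈ I.minimalPrimes :=
    mem_minimalPrimes_of_le_sup_mul (Ideal.span_le.2 (Set.range_subset_iff.2 hv))
      (IsNoetherian.noetherian J) hmJ hJI
  have hheight : (Fintype.card σ : ℕ∞) ≤ (Set.range v).ncard :=
    card_le_height_idealOfVars.trans
      (Ideal.height_le_card_of_mem_minimalPrimes_span (Set.finite_range v) hmin)
  have hncard : (Set.range v).ncard ≤ r := by
    simpa [Set.image_univ] using Set.ncard_image_le (f := v) Set.finite_univ
  exact (Nat.cast_le.1 hheight).trans hncard

end Variables

section NotPrecomplete

variable {σ τ R : Type*} [CommRing R]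

theorem map_map_idealOfVars_le {S : Type*} [CommRing S] (φ : R →+* S) :
    (idealOfVars σ R).map (map φ) ≤ idealOfVars σ S := by
  rw [Ideal.map_span, Ideal.span_le]
  rintro _ ⟨_, ⟨i, rfl⟩, rfl⟩
  exact Ideal.subset_span ⟨i, (map_X φ i).symm⟩

theorem killCompl_X_of_notMem_range {f : σ → τ} (hf : Function.Injective f) {i : τ}
    (hi : i ∉ Set.range f) : killCompl hf (X i : MvPolynomial τ R) = 0 :=
  killCompl_monomial_eq_zero_of_notMem_range hf 1 (by simp : i ∈ (Finsupp.single i 1).support) hi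

theorem map_killCompl_idealOfVars_le {f : σ → τ} (hf : Function.Injective f) :
    (idealOfVars τ R).map (killCompl hf) ≤ idealOfVars σ R := by
  rw [Ideal.map_span, Ideal.span_le]
  rintro _ ⟨_, ⟨i, rfl⟩, rfl⟩
  by_cases hi : i ∈ Set.range f
  · obtain ⟨j, rfl⟩ := hi
    rw [← rename_X, killCompl_rename_app]
    exact Ideal.subset_span ⟨j, rfl⟩
  · simp [killCompl_X_of_notMem_range hf hi]

theorem exists_gt_natCast_ne_zero (K : Type*) [AddGroupWithOne K] [NeZero (1 : K)] (n : ℕ) :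
    ∃ d > n, (d : K) ≠ 0 := by
  by_contra! h
  have hsucc := h (n + 2) (by lia)
  rw [Nat.cast_succ, h (n + 1) (by lia), zero_add] at hsucc
  exact one_ne_zero hsucc

variable (R) in
/-- The power sum of degree `e l` in the `l`-th of the pairwise disjoint blocks of variables
singled out by `b`, the `l`-th block having `l` elements. -/
def blockPsum (b : (Σ l, Fin l) ↪ σ) (e : ℕ → ℕ) (l : ℕ) : MvPolynomial σ R :=
  rename (fun i ↦ b ⟨l, i⟩) (psum (Fin l) R (e l))

theorem blockPsum_mem_idealOfVars_pow (b : (Σ l, Fin l) ↪ σ) {e : ℕ → ℕ} {l n : ℕ}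
    (hn : n ≤ e l) : blockPsum R b e l ∈ idealOfVars σ R ^ n := by
  simp only [blockPsum, psum, map_sum, map_pow, rename_X]
  exact sum_mem fun i _ ↦ Ideal.pow_le_pow_right hn
    (Ideal.pow_mem_pow (Ideal.subset_span (Set.mem_range_self _)) _)

theorem killCompl_blockPsum_of_ne (b : (Σ l, Fin l) ↪ σ) {e : ℕ → ℕ} {l m : ℕ} (he : e l ≠ 0)
    (hlm : l ≠ m) :
    killCompl (b.injective.comp (sigma_mk_injective (i := m))) (blockPsum R b e l) = 0 := by
  have hnotMem (i : Fin l) : b ⟨l, i⟩ ∉ Set.range (b ∘ Sigma.mk m) := by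
    rintro ⟨j, hj⟩
    exact hlm (congrArg Sigma.fst (b.injective hj)).symm
  simp [blockPsum, psum, killCompl_X_of_notMem_range _ (hnotMem _), he]

theorem killCompl_sum_blockPsum (b : (Σ l, Fin l) ↪ σ) {e : ℕ → ℕ} (he : ∀ l, e l ≠ 0) {m n : ℕ}
    (hmn : m < n) :
    killCompl (b.injective.comp (sigma_mk_injective (i := m)))
      (∑ l ∈ Finset.range n, blockPsum R b e l) = psum (Fin m) R (e m) := by
  rw [map_sum, Finset.sum_eq_single_of_mem m (Finset.mem_range.2 hmn)
    fun l _ hlm ↦ killCompl_blockPsum_of_ne b (he l) hlm]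
  exact killCompl_rename_app _ _

theorem not_isPrecomplete_ker_evalOneₐ_idealOfVars [Infinite σ] [Nontrivial R] :
    ¬ IsPrecomplete (RingHom.ker (AdicCompletion.evalOneₐ (idealOfVars σ R)))
      (AdicCompletion (idealOfVars σ R) (MvPolynomial σ R)) := by
  intro _
  obtain ⟨M, _⟩ := Ideal.exists_maximal R
  let _ := Ideal.Quotient.field M
  let b : (Σ l, Fin l) ↪ σ := (Encodable.encode' _).trans (Infinite.natEmbedding σ)
  -- Degrees nonzero in `R ⧸ M` keep the partial derivatives of the power sums nonzero there.
  choose e he heM using fun l ↦ exists_gt_natCast_ne_zero (R ⧸ M) (l + 1)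
  obtain ⟨x, hx⟩ := exists_evalₐ_eq_mk_sum_range fun l ↦
    blockPsum_mem_idealOfVars_pow (R := R) b (show l ≤ e l by grind)
  have hx2 : x ∈ RingHom.ker (AdicCompletion.evalₐ (idealOfVars σ R) 2) := by
    rw [RingHom.mem_ker, hx, Ideal.Quotient.eq_zero_iff_mem]
    exact sum_mem fun l _ ↦ blockPsum_mem_idealOfVars_pow b (by grind)
  obtain ⟨r, hr⟩ := exists_memSqSpanMod_of_mem_sq (ker_evalₐ_le_pow_of_isPrecomplete 2 hx2)
  obtain ⟨N, hN⟩ := exists_card_le_of_memSqSpanMod_psum (σ := Fin (r + 1)) (heM (r + 1)).isUnit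
  set n := max N (r + 2)
  have hpsum := (hr n _ (hx n)).map _ (map_killCompl_idealOfVars_le
    (b.injective.comp (sigma_mk_injective (i := r + 1))))
  rw [killCompl_sum_blockPsum b (fun l ↦ by grind) (by grind)] at hpsum
  have hcard := hN n (le_max_left _ _) r (by
    simpa [psum] using hpsum.map _ (map_map_idealOfVars_le (Ideal.Quotient.mk M)))
  simp at hcard

end NotPrecomplete

section EpsilonAug

variable (k : Type*) [Field k]

theorem mAug_eq_idealOfVars : mAug k = idealOfVars ℕ k := by
  ext p
  rw [← pow_one (idealOfVars ℕ k), mem_pow_idealOfVars_iff']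
  simp [mAug, evalZero, constantCoeff_eq, Finsupp.degree_eq_zero_iff]

theorem ker_epsilonAug :
    RingHom.ker (epsilonAug k) = RingHom.ker (AdicCompletion.evalOneₐ (mAug k)) :=
  RingHom.ker_equiv_comp (AdicCompletion.evalOneₐ (mAug k)).toRingHom
    (RingHom.quotientKerEquivOfSurjective (evalZero_surjective k))

theorem not_isPrecomplete_ker_epsilonAug :
    ¬ IsPrecomplete (RingHom.ker (epsilonAug k)) (Rcompletion k) := by
  rw [ker_epsilonAug]
  unfold Rcompletion
  rw [mAug_eq_idealOfVars]
  exact not_isPrecomplete_ker_evalOneₐ_idealOfVars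

theorem adicCompletion_of_polynomial_ring_not_complete_general :
    (∀ p : MvPolynomial ℕ k,
        epsilonAug k (algebraMap (MvPolynomial ℕ k) (Rcompletion k) p) =
          aeval (fun _ : ℕ => (0 : k)) p) ∧
    ¬ Function.Surjective
        (algebraMap (Rcompletion k)
          (AdicCompletion (RingHom.ker (epsilonAug k)) (Rcompletion k))) ∧
    ¬ IsAdicComplete (RingHom.ker (epsilonAug k)) (Rcompletion k) :=
  ⟨fun _ ↦ rfl,
    fun h ↦ not_isPrecomplete_ker_epsilonAug k (AdicCompletion.of_surjective_iff.1 h),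
    fun h ↦ not_isPrecomplete_ker_epsilonAug k h.toIsPrecomplete⟩

end EpsilonAug

/-- Let `k` be a field of characteristic zero, `P = k[x₁, x₂, …]` the polynomial ring on
countably many variables, `𝔪` its augmentation ideal, `R = lim_n P/𝔪ⁿ` the `𝔪`-adic
completion of `P`, and `𝔪_R = ker ε` the augmentation ideal of `R`, where `ε : R → k` is
induced by sending every variable to `0` (so that `ε` restricted to `P` is evaluation at
zero). Then the canonical ring homomorphism `R → lim_n R/𝔪_Rⁿ` to the `𝔪_R`-adic
completion is not surjective; in particular `R` is not `𝔪_R`-adically complete. -/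
theorem adicCompletion_of_polynomial_ring_not_complete
    (k : Type*) [Field k] [CharZero k] :
    (∀ p : MvPolynomial ℕ k,
        epsilonAug k (algebraMap (MvPolynomial ℕ k) (Rcompletion k) p) =
          aeval (fun _ : ℕ => (0 : k)) p) ∧
    ¬ Function.Surjective
        (algebraMap (Rcompletion k)
          (AdicCompletion (RingHom.ker (epsilonAug k)) (Rcompletion k))) ∧
    ¬ IsAdicComplete (RingHom.ker (epsilonAug k)) (Rcompletion k) :=
  adicCompletion_of_polynomial_ring_not_complete_general k
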